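/- Define N(m) = m XOR (2m) and α(m) = m XOR ⌊m/2⌋, and let e(k) denote the k-th evil number in increasing order (with e(0) = 0). Then: (1) for every j ≥ 1, the integer (N(j) − e(j)) − 2·(α(j) − j) lies in {−1, 0, 1}; and (2) for every j ∈ ℕ, ((N(2j) − e(2j)) − 2·(α(2j) − 2j)) + ((N(2j+1) − e(2j+1)) − 2·(α(2j+1) − (2j+1))) = 0, where all differences are computed in ℤ. -/

import Mathlib

/-- `N(m) = m XOR 2m`. -/
def nimDouble (m : ℕ) : ℕ := m ^^^ (2 * m)

/-- `α(m) = m XOR ⌊m/2⌋`. -/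
def grayCode (m : ℕ) : ℕ := m ^^^ (m / 2)

/-- A natural number is evil if its binary expansion has an even number of ones. -/
def Evil (n : ℕ) : Prop := Even ((Nat.digits 2 n).count 1)

/-- `e(k)`, the `k`-th smallest evil number (indexing from 0). -/
noncomputable def evilNth (k : ℕ) : ℕ := Nat.nth Evil k

/-!
Since `2m` ends in the binary digit `0`, dropping the last digit of `N(m)` gives `α(m)`, so
`N(m) = 2 α(m) + (m mod 2)`. Exactly one of `2k` and `2k + 1` is evil, so `e(k) = 2k + t(k)` with
`t` the Thue–Morse sequence. Hence `(N(j) - e(j)) - 2 (α(j) - j) = (j mod 2) - t(j)`, and the terms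
at `2j` and `2j + 1` cancel because `t(2j) + t(2j + 1) = 1`.
-/

theorem xor_two_mul (m n : ℕ) : m ^^^ (2 * n) = 2 * (m / 2 ^^^ n) + m % 2 := by
  have div_two : (m ^^^ (2 * n)) / 2 = m / 2 ^^^ n := by
    rw [Nat.xor_div_two, Nat.mul_div_cancel_left n two_pos]
  have mod_two : (m ^^^ (2 * n)) % 2 = m % 2 := by
    rw [Nat.xor_mod_two_eq, Nat.add_mul_mod_self_left]
  rw [← div_two, ← mod_two, Nat.div_add_mod]

theorem nimDouble_eq_two_mul_grayCode_add (m : ℕ) : nimDouble m = 2 * grayCode m + m % 2 := by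
  rw [nimDouble, grayCode, xor_two_mul, Nat.xor_comm]

section OneOfEachPair

variable {p : ℕ → Prop}

theorem count_two_mul_of_succ_iff_not [DecidablePred p] (hp : ∀ k, p (2 * k + 1) ↔ ¬ p (2 * k))
    (k : ℕ) : Nat.count p (2 * k) = k := by
  induction k with
  | zero => rfl
  | succ k ih =>
    rw [mul_add_one, Nat.count_succ, Nat.count_succ, ih]
    by_cases h : p (2 * k) <;> simp [hp, h]

theorem nth_div_two_of_succ_iff_not (hp : ∀ k, p (2 * k + 1) ↔ ¬ p (2 * k)) {n : ℕ} (hn : p n) :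
    Nat.nth p (n / 2) = n := by
  classical
  have count_eq : Nat.count p n = n / 2 := by
    obtain ⟨k, rfl | rfl⟩ := n.even_or_odd'
    · rw [count_two_mul_of_succ_iff_not hp, Nat.mul_div_cancel_left k two_pos]
    · rw [Nat.count_succ, count_two_mul_of_succ_iff_not hp, if_neg ((hp k).1 hn)]
      lia
  rw [← count_eq, Nat.nth_count hn]

end OneOfEachPair

/-- The Thue–Morse sequence: the parity, `0` or `1`, of the number of ones in the binary expansion
of `n`. Its zeros are the evil numbers. -/
def thueMorse (n : ℕ) : ℕ := (Nat.digits 2 n).count 1 % 2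

theorem thueMorse_lt_two (n : ℕ) : thueMorse n < 2 := Nat.mod_lt _ two_pos

theorem evil_iff_thueMorse_eq_zero {n : ℕ} : Evil n ↔ thueMorse n = 0 := Nat.even_iff

theorem thueMorse_two_mul (k : ℕ) : thueMorse (2 * k) = thueMorse k := by
  obtain rfl | hk := k.eq_zero_or_pos
  · rfl
  · rw [thueMorse, Nat.digits_base_mul one_lt_two hk, List.count_cons_of_ne zero_ne_one, thueMorse]

theorem thueMorse_two_mul_add_one (k : ℕ) : thueMorse (2 * k + 1) = (thueMorse k + 1) % 2 := by
  rw [thueMorse, add_comm, Nat.digits_add 2 one_lt_two 1 k one_lt_two (.inl one_ne_zero),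
    List.count_cons_self, thueMorse, Nat.mod_add_mod]

theorem thueMorse_two_mul_add_thueMorse_two_mul_add_one (k : ℕ) :
    thueMorse (2 * k) + thueMorse (2 * k + 1) = 1 := by
  have := thueMorse_lt_two k
  rw [thueMorse_two_mul, thueMorse_two_mul_add_one]
  lia

theorem evil_two_mul_add_one_iff (k : ℕ) : Evil (2 * k + 1) ↔ ¬ Evil (2 * k) := by
  have := thueMorse_two_mul_add_thueMorse_two_mul_add_one k
  rw [evil_iff_thueMorse_eq_zero, evil_iff_thueMorse_eq_zero]
  lia

theorem evil_two_mul_add_thueMorse (k : ℕ) : Evil (2 * k + thueMorse k) := by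
  rw [evil_iff_thueMorse_eq_zero]
  obtain h | h : thueMorse k = 0 ∨ thueMorse k = 1 := by have := thueMorse_lt_two k; lia
  · rw [h, add_zero, thueMorse_two_mul, h]
  · rw [h, thueMorse_two_mul_add_one, h]

theorem evilNth_eq_two_mul_add_thueMorse (k : ℕ) : evilNth k = 2 * k + thueMorse k := by
  have div_two : (2 * k + thueMorse k) / 2 = k := by have := thueMorse_lt_two k; lia
  simpa only [evilNth, div_two] using
    nth_div_two_of_succ_iff_not evil_two_mul_add_one_iff (evil_two_mul_add_thueMorse k)

theorem nimDouble_sub_evilNth_sub_two_mul (j : ℕ) :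
    ((nimDouble j : ℤ) - evilNth j) - 2 * ((grayCode j : ℤ) - j) =
      ((j % 2 : ℕ) : ℤ) - thueMorse j := by
  rw [nimDouble_eq_two_mul_grayCode_add, evilNth_eq_two_mul_add_thueMorse]
  push_cast
  ring

theorem stmt_18 :
    (∀ j : ℕ, 1 ≤ j →
      ((nimDouble j : ℤ) - (evilNth j : ℤ)) - 2 * ((grayCode j : ℤ) - (j : ℤ)) ∈
        ({-1, 0, 1} : Set ℤ)) ∧
    (∀ j : ℕ,
      (((nimDouble (2 * j) : ℤ) - (evilNth (2 * j) : ℤ)) -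
          2 * ((grayCode (2 * j) : ℤ) - (2 * j : ℤ))) +
        (((nimDouble (2 * j + 1) : ℤ) - (evilNth (2 * j + 1) : ℤ)) -
          2 * ((grayCode (2 * j + 1) : ℤ) - (2 * j + 1 : ℤ))) = 0) := by
  constructor
  · intro j _
    have := thueMorse_lt_two j
    rw [nimDouble_sub_evilNth_sub_two_mul, Set.mem_insert_iff, Set.mem_insert_iff,
      Set.mem_singleton_iff]
    lia
  · intro j
    have := thueMorse_two_mul_add_thueMorse_two_mul_add_one j
    have even_term := nimDouble_sub_evilNth_sub_two_mul (2 * j)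
    have odd_term := nimDouble_sub_evilNth_sub_two_mul (2 * j + 1)
    push_cast at even_term odd_term
    rw [even_term, odd_term]
    lia
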